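/- There exists C > 0 such that for every τ ∈ (0,1] and every sequence (u_n)_{n∈ℤ} of functions in L²(𝕋) with only finitely many nonzero terms, ‖(Π_τ u_n)_{n∈ℤ}‖_{ℓ⁴_τ L⁴} ≤ C ‖(u_n)‖_{X^{0,3/8}_τ}. -/

import Mathlib

noncomputable section

open MeasureTheory Complex Filter Topology AddCircle
open scoped ENNReal

abbrev Torus := AddCircle (2 * Real.pi)

instance : Fact (0 < 2 * Real.pi) := ⟨by positivity⟩

/-- Japanese bracket `⟨x⟩ = (1+|x|²)^{1/2}`. -/
def jbr (x : ℝ) : ℝ := Real.sqrt (1 + x ^ 2)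

/-- The Sobolev `H^s` norm on the torus, via Fourier coefficients. -/
def hsNorm (s : ℝ) (f : Torus → ℂ) : ℝ :=
  Real.sqrt (∑' k : ℤ, jbr k ^ (2 * s) * ‖fourierCoeff f k‖ ^ 2)

/-- Membership in `H^s(𝕋)` (as a function): square integrable with finite `H^s` norm. -/
def InHs (s : ℝ) (f : Torus → ℂ) : Prop :=
  MemLp f 2 haarAddCircle ∧ Summable fun k : ℤ => jbr k ^ (2 * s) * ‖fourierCoeff f k‖ ^ 2

/-- The frequency cutoff `Π_τ`, keeping the Fourier modes `|k| ≤ τ^{-1/2}`. -/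
def projC (τ : ℝ) (f : Torus → ℂ) : Torus → ℂ := fun x =>
  ∑' k : ℤ, if |(k : ℝ)| ≤ τ ^ (-(1 : ℝ) / 2) then fourierCoeff f k * fourier k x else 0

/-- The free Schrödinger group `e^{it∂_x²}`, given by the Fourier multiplier `e^{-itk²}`. -/
def schrod (t : ℝ) (f : Torus → ℂ) : Torus → ℂ := fun x =>
  ∑' k : ℤ, Complex.exp (-Complex.I * t * (k : ℂ) ^ 2) * fourierCoeff f k * fourier k x

/-- Continuity on `I` with values in `L²(𝕋)`. -/
def ContL2On (I : Set ℝ) (u : ℝ → Torus → ℂ) : Prop :=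
  (∀ t ∈ I, MemLp (u t) 2 haarAddCircle) ∧
  ∀ t ∈ I, Tendsto (fun t' => eLpNorm (u t' - u t) 2 haarAddCircle) (nhdsWithin t I) (nhds 0)

/-- Continuity on `I` with values in `H^s(𝕋)`. -/
def ContHsOn (s : ℝ) (I : Set ℝ) (u : ℝ → Torus → ℂ) : Prop :=
  (∀ t ∈ I, InHs s (u t)) ∧
  ∀ t ∈ I, Tendsto (fun t' => hsNorm s (u t' - u t)) (nhdsWithin t I) (nhds 0)

/-- The cubic nonlinearity `|f|² f` (pointwise). -/
def cubic (f : Torus → ℂ) : Torus → ℂ := fun x => (‖f x‖ : ℂ) ^ 2 * f x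

/-- The filtered cubic nonlinearity `Π_τ(|Π_τ f|² Π_τ f)`. -/
def projCubic (τ : ℝ) (f : Torus → ℂ) : Torus → ℂ := projC τ (cubic (projC τ f))

/-- `v` is the (global-in-time) mild solution of the projected equation
`i∂_t v = -∂_x² v - μ Π_τ(|Π_τ v|² Π_τ v)`, `v(0) = Π_τ u₀`. -/
def IsProjSolution (μ τ : ℝ) (u₀ : Torus → ℂ) (v : ℝ → Torus → ℂ) : Prop :=
  ContL2On Set.univ v ∧
  ∀ t : ℝ, ∀ x : Torus,
    v t x = schrod t (projC τ u₀) x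
      + Complex.I * μ * ∫ s in (0 : ℝ)..t, schrod (t - s) (projCubic τ (v s)) x

/-- The cubic NLS `i∂_t u = -∂_x² u - μ |u|² u` holds in the sense of space-time
distributions on `(0,T) × 𝕋` (tested against `ψ(t) e^{-ikx}`). -/
def DistribSolOn (μ T : ℝ) (u : ℝ → Torus → ℂ) : Prop :=
  ∀ k : ℤ, ∀ ψ : ℝ → ℂ, ContDiff ℝ (⊤ : ℕ∞) ψ → tsupport ψ ⊆ Set.Ioo 0 T →
    -Complex.I * ∫ t : ℝ, deriv ψ t * fourierCoeff (u t) k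
      = (k : ℂ) ^ 2 * ∫ t : ℝ, ψ t * fourierCoeff (u t) k
        - (μ : ℂ) * ∫ t : ℝ, ψ t * fourierCoeff (cubic (u t)) k

/-- `u ∈ L⁴((0,T) × 𝕋)`. -/
def SpaceTimeL4 (T : ℝ) (u : ℝ → Torus → ℂ) : Prop :=
  MemLp (fun p : ℝ × Torus => u p.1 p.2) 4
    ((volume.restrict (Set.Ioo 0 T)).prod haarAddCircle)

/-- Space-time Fourier transform `ṽ(σ,k)` of `v : ℝ × 𝕋 → ℂ`. -/
def stFT (v : ℝ → Torus → ℂ) (σ : ℝ) (k : ℤ) : ℂ :=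
  ∫ t : ℝ, Complex.exp (-Complex.I * σ * t) * fourierCoeff (v t) k

/-- The (continuous) Bourgain `X^{s,b}` norm, valued in `ℝ≥0∞`. -/
def XcNorm (s b : ℝ) (v : ℝ → Torus → ℂ) : ℝ≥0∞ :=
  (∫⁻ σ : ℝ, ∑' k : ℤ,
      ENNReal.ofReal ((1 + |(k : ℝ)|) ^ (2 * s) * (1 + |σ + (k : ℝ) ^ 2|) ^ (2 * b)
        * ‖stFT v σ k‖ ^ 2)) ^ (1 / 2 : ℝ)

/-- The restriction norm `‖u‖_{X^{s,b}(T)}` is bounded by `M`: some extension of `u`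
from `(0,T)` has `X^{s,b}` norm at most `M`. -/
def XresBounded (s b T : ℝ) (u : ℝ → Torus → ℂ) (M : ℝ≥0∞) : Prop :=
  ∃ v : ℝ → Torus → ℂ, (∀ t ∈ Set.Ioo 0 T, v t = u t) ∧ XcNorm s b v ≤ M

/-- `u` is a Bourgain-class solution of cubic NLS on `[0,T]` with datum `u₀`. -/
def IsNLSSolution (μ T : ℝ) (u₀ : Torus → ℂ) (u : ℝ → Torus → ℂ) : Prop :=
  ContL2On (Set.Icc 0 T) u ∧ SpaceTimeL4 T u ∧
  (∃ b ∈ Set.Ioo (1 / 2 : ℝ) (5 / 8 : ℝ), ∃ v : ℝ → Torus → ℂ,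
      (∀ t ∈ Set.Ioo 0 T, v t = u t) ∧ XcNorm 0 b v < ⊤) ∧
  u 0 = u₀ ∧ DistribSolOn μ T u

/-- One step of the pointwise nonlinear flow `e^{iμτ|Π_τ f|²} Π_τ f`. -/
def lieFlow (μ τ : ℝ) (f : Torus → ℂ) : Torus → ℂ := fun x =>
  Complex.exp (Complex.I * μ * τ * (‖projC τ f x‖ : ℂ) ^ 2) * projC τ f x

/-- The filtered Lie splitting scheme `u⁰ = Π_τ u₀`,
`u^{n+1} = e^{iτ∂_x²} Π_τ (e^{iμτ|Π_τ uⁿ|²} Π_τ uⁿ)`. -/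
def lieScheme (μ τ : ℝ) (u₀ : Torus → ℂ) : ℕ → Torus → ℂ
  | 0 => projC τ u₀
  | n + 1 => schrod τ (projC τ (lieFlow μ τ (lieScheme μ τ u₀ n)))

/-- `d_τ(σ) = (e^{iτσ}-1)/τ`. -/
def dtau (τ σ : ℝ) : ℂ := (Complex.exp (Complex.I * τ * σ) - 1) / τ

/-- The discrete Bourgain `X^{s,b}_τ` norm of a sequence of functions on the torus. -/
def XdNorm (τ s b : ℝ) (u : ℤ → Torus → ℂ) : ℝ :=
  Real.sqrt (∫ σ in Set.Ioc (-(Real.pi / τ)) (Real.pi / τ),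
    ∑' k : ℤ, jbr k ^ (2 * s) * jbr ‖dtau τ (σ - (k : ℝ) ^ 2)‖ ^ (2 * b) *
      ‖(τ : ℂ) * ∑' m : ℤ, fourierCoeff (u m) k * Complex.exp (Complex.I * m * τ * σ)‖ ^ 2)

/-- The discrete space-time Lebesgue norm `‖(u_n)‖_{ℓ^p_τ L^q}`. -/
def lpLqNorm (τ p q : ℝ) (u : ℤ → Torus → ℂ) : ℝ :=
  (τ * ∑' n : ℤ, (eLpNorm (u n) (ENNReal.ofReal q) haarAddCircle).toReal ^ p) ^ (1 / p)

/-!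
Squaring turns the `ℓ⁴L⁴` norm into the `ℓ²` norm of the space-time Fourier coefficients of a
product, with time frequency `θ = τσ` on the circle. Split each factor dyadically according to its
modulation `⟨d_τ(σ - k²)⟩ ∼ 2 ^ i`, which confines it to an arc of length `∼ τ 2 ^ i` around the
phase `τk²`. For two pieces with `i ≤ j`, Cauchy–Schwarz in the convolution costs the length
`τ 2 ^ i` of the shorter arc times the number of pairs with `k + k' = l` and `τ(k² + k'²)` within
`τ 2 ^ j` of a given point. Since `2(k² + k'²) = l² + (k - k')²`, and the cutoff keeps the phases
from wrapping around the circle, this number is `O(2 ^ (j / 2))`. Relative to the weights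
`2 ^ (3i/8) 2 ^ (3j/8)` the interaction therefore gains `2 ^ (-|i - j| / 8)`, and the double sum
over `i` and `j` is controlled by a geometric series.
-/

open scoped Convolution Pointwise

section DyadicSums

variable {r : ℝ} {s : Finset ℕ}

lemma sum_pow_natDist_le (hr₀ : 0 ≤ r) (hr₁ : r < 1) (i : ℕ) :
    ∑ j ∈ s, r ^ Nat.dist i j ≤ 2 * (1 - r)⁻¹ := by
  have sum_le_of_injOn : ∀ t : Finset ℕ, Set.InjOn (Nat.dist i) t →
      ∑ j ∈ t, r ^ Nat.dist i j ≤ (1 - r)⁻¹ := by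
    intro t ht
    rw [← Finset.sum_image (f := fun d => r ^ d) ht, ← tsum_geometric_of_lt_one hr₀ hr₁]
    exact (summable_geometric_of_lt_one hr₀ hr₁).sum_le_tsum _ fun _ _ => by positivity
  have hbelow := sum_le_of_injOn {j ∈ s | j ≤ i} fun a ha b hb hab => by
    simp only [Finset.coe_filter, Set.mem_ofPred_eq, Nat.dist] at ha hb hab
    omega
  have habove := sum_le_of_injOn {j ∈ s | ¬ j ≤ i} fun a ha b hb hab => by
    simp only [Finset.coe_filter, Set.mem_ofPred_eq, Nat.dist] at ha hb hab
    omega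
  rw [← Finset.sum_filter_add_sum_filter_not s (· ≤ i)]
  linarith

lemma sum_sum_pow_natDist_mul_le (hr₀ : 0 ≤ r) (hr₁ : r < 1) (β : ℕ → ℝ) :
    ∑ i ∈ s, ∑ j ∈ s, r ^ Nat.dist i j * (β i * β j)
      ≤ 2 * (1 - r)⁻¹ * ∑ i ∈ s, β i ^ 2 := by
  have row_sum_le : ∑ i ∈ s, ∑ j ∈ s, r ^ Nat.dist i j * (β i ^ 2 / 2)
      ≤ (1 - r)⁻¹ * ∑ i ∈ s, β i ^ 2 := by
    rw [Finset.mul_sum]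
    refine Finset.sum_le_sum fun i _ => ?_
    rw [← Finset.sum_mul]
    nlinarith [sum_pow_natDist_le (s := s) hr₀ hr₁ i, sq_nonneg (β i)]
  have column_sum_eq : ∑ i ∈ s, ∑ j ∈ s, r ^ Nat.dist i j * (β j ^ 2 / 2)
      = ∑ i ∈ s, ∑ j ∈ s, r ^ Nat.dist i j * (β i ^ 2 / 2) := by
    rw [Finset.sum_comm]
    simp_rw [Nat.dist_comm]
  calc ∑ i ∈ s, ∑ j ∈ s, r ^ Nat.dist i j * (β i * β j)
      ≤ ∑ i ∈ s, ∑ j ∈ s,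
          (r ^ Nat.dist i j * (β i ^ 2 / 2) + r ^ Nat.dist i j * (β j ^ 2 / 2)) := by
        gcongr with i _ j _
        rw [← mul_add]
        gcongr
        linarith [two_mul_le_add_sq (β i) (β j)]
    _ ≤ 2 * (1 - r)⁻¹ * ∑ i ∈ s, β i ^ 2 := by
        simp_rw [Finset.sum_add_distrib]
        linarith

lemma norm_sum_sum_le_of_norm_le_pow_natDist {E : Type*} [SeminormedAddCommGroup E]
    {V : ℕ → ℕ → E} {M : ℝ} {β : ℕ → ℝ} (hr₀ : 0 ≤ r) (hr₁ : r < 1) (hM : 0 ≤ M)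
    (hV : ∀ i j, ‖V i j‖ ≤ M * (r ^ Nat.dist i j * (β i * β j))) :
    ‖∑ i ∈ s, ∑ j ∈ s, V i j‖ ≤ M * (2 * (1 - r)⁻¹ * ∑ i ∈ s, β i ^ 2) := by
  calc ‖∑ i ∈ s, ∑ j ∈ s, V i j‖
      ≤ ∑ i ∈ s, ∑ j ∈ s, M * (r ^ Nat.dist i j * (β i * β j)) :=
        norm_sum_le_of_le _ fun i _ => norm_sum_le_of_le _ fun j _ => hV i j
    _ = M * ∑ i ∈ s, ∑ j ∈ s, r ^ Nat.dist i j * (β i * β j) := by simp_rw [Finset.mul_sum]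
    _ ≤ _ := by gcongr; exact sum_sum_pow_natDist_mul_le hr₀ hr₁ β

end DyadicSums

lemma two_pow_log_floor_le {x : ℝ} (hx : 1 ≤ x) : (2 : ℝ) ^ Nat.log 2 ⌊x⌋₊ ≤ x := by
  have hfloor : ⌊x⌋₊ ≠ 0 := (Nat.floor_pos.2 hx).ne'
  calc (2 : ℝ) ^ Nat.log 2 ⌊x⌋₊ ≤ ⌊x⌋₊ := mod_cast Nat.pow_log_le_self 2 hfloor
    _ ≤ x := Nat.floor_le (by linarith)

lemma lt_two_pow_log_floor_add_one (x : ℝ) : x < (2 : ℝ) ^ (Nat.log 2 ⌊x⌋₊ + 1) :=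
  calc x < ⌊x⌋₊ + 1 := Nat.lt_floor_add_one x
    _ ≤ 2 ^ (Nat.log 2 ⌊x⌋₊ + 1) := mod_cast Nat.lt_pow_succ_log_self one_lt_two ⌊x⌋₊

section LatticePoints

variable {A : Finset ℤ}

lemma card_le_add_one_of_forall_sub_le {R : ℝ} (hR : 0 ≤ R)
    (hA : ∀ q ∈ A, ∀ q' ∈ A, (q : ℝ) - q' ≤ R) : (A.card : ℝ) ≤ R + 1 := by
  rcases A.eq_empty_or_nonempty with rfl | hne
  · simpa using by linarith
  have hsub : A ⊆ Finset.Icc (A.min' hne) (A.min' hne + ⌊R⌋) := fun q hq => by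
    have hfloor : q - A.min' hne ≤ ⌊R⌋ :=
      Int.le_floor.2 (mod_cast hA q hq _ (A.min'_mem hne))
    exact Finset.mem_Icc.2 ⟨A.min'_le q hq, by omega⟩
  have hcard : (A.card : ℤ) ≤ ⌊R⌋ + 1 := by
    have := Finset.card_le_card hsub
    rw [Int.card_Icc] at this
    have := Int.floor_nonneg.2 hR
    omega
  calc (A.card : ℝ) ≤ ⌊R⌋ + 1 := mod_cast hcard
    _ ≤ R + 1 := by gcongr; exact Int.floor_le R

lemma card_le_of_forall_sq_sub_sq_le {D : ℝ}
    (hA : ∀ q ∈ A, ∀ q' ∈ A, (q : ℝ) ^ 2 - (q' : ℝ) ^ 2 ≤ D) :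
    (A.card : ℝ) ≤ 2 * (√D + 1) := by
  have sub_le_sqrt : ∀ q ∈ A, ∀ q' ∈ A, 0 ≤ q * q' → (q : ℝ) - q' ≤ √D := by
    intro q hq q' hq' hsign
    have hsign' : (0 : ℝ) ≤ q * q' := mod_cast hsign
    apply Real.le_sqrt_of_sq_le
    rcases le_total ((q : ℝ) ^ 2) ((q' : ℝ) ^ 2) with h | h
    · nlinarith [hA q' hq' q hq]
    · nlinarith [hA q hq q' hq']
  have hnonneg : (({q ∈ A | 0 ≤ q}.card : ℕ) : ℝ) ≤ √D + 1 :=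
    card_le_add_one_of_forall_sub_le (Real.sqrt_nonneg D) fun q hq q' hq' => by
      rw [Finset.mem_filter] at hq hq'
      exact sub_le_sqrt q hq.1 q' hq'.1 (mul_nonneg hq.2 hq'.2)
  have hneg : (({q ∈ A | ¬ 0 ≤ q}.card : ℕ) : ℝ) ≤ √D + 1 :=
    card_le_add_one_of_forall_sub_le (Real.sqrt_nonneg D) fun q hq q' hq' => by
      rw [Finset.mem_filter, not_le] at hq hq'
      exact sub_le_sqrt q hq.1 q' hq'.1 (mul_pos_of_neg_of_neg hq.2 hq'.2).le
  have hsplit : (A.card : ℝ) = ({q ∈ A | 0 ≤ q}.card : ℕ) + ({q ∈ A | ¬ 0 ≤ q}.card : ℕ) :=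
    mod_cast (Finset.card_filter_add_card_filter_not (s := A) (0 ≤ ·)).symm
  linarith

end LatticePoints

section CauchySchwarz

lemma sq_norm_sum_le_card_support_mul {ι E : Type*} [SeminormedAddCommGroup E] [DecidableEq E]
    (s : Finset ι) (z : ι → E) :
    ‖∑ i ∈ s, z i‖ ^ 2 ≤ ({i ∈ s | z i ≠ 0}.card : ℕ) * ∑ i ∈ s, ‖z i‖ ^ 2 := by
  rw [← Finset.sum_filter_ne_zero]
  calc ‖∑ i ∈ s with z i ≠ 0, z i‖ ^ 2
      ≤ (∑ i ∈ s with z i ≠ 0, ‖z i‖) ^ 2 := by gcongr; exact norm_sum_le _ _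
    _ ≤ ({i ∈ s | z i ≠ 0}.card : ℕ) * ∑ i ∈ s with z i ≠ 0, ‖z i‖ ^ 2 :=
        sq_sum_le_card_mul_sum_sq
    _ ≤ ({i ∈ s | z i ≠ 0}.card : ℕ) * ∑ i ∈ s, ‖z i‖ ^ 2 := by
        gcongr
        exact Finset.filter_subset _ _

lemma sq_norm_integral_le_measureReal_mul {α E : Type*} [MeasurableSpace α] {μ : Measure α}
    [IsFiniteMeasure μ] [NormedAddCommGroup E] [NormedSpace ℝ E] {h : α → E} (hh : MemLp h 2 μ)
    {A : Set α} (hA : MeasurableSet A) (hsupp : Function.support h ⊆ A) :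
    ‖∫ x, h x ∂μ‖ ^ 2 ≤ μ.real A * ∫ x, ‖h x‖ ^ 2 ∂μ := by
  have hind : MemLp (A.indicator fun _ => (1 : ℝ)) (ENNReal.ofReal 2) μ :=
    (memLp_const 1).indicator hA
  have hholder := integral_mul_le_Lp_mul_Lq_of_nonneg Real.HolderConjugate.two_two
    (ae_of_all μ fun x => Set.indicator_nonneg (fun _ _ => zero_le_one) x)
    (ae_of_all μ fun x => norm_nonneg (h x)) hind (by simpa using hh.norm)
  have hmul : ∀ x, A.indicator (fun _ => (1 : ℝ)) x * ‖h x‖ = ‖h x‖ := fun x => by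
    by_cases hx : x ∈ A
    · simp [hx]
    · simp [Function.notMem_support.1 fun h' => hx (hsupp h')]
  have hone : ∫ x, A.indicator (fun _ => (1 : ℝ)) x ^ 2 ∂μ = μ.real A := by
    rw [← integral_indicator_one hA]
    congr with x
    by_cases hx : x ∈ A <;> simp [hx]
  simp only [hmul, Real.rpow_two, hone, ← Real.sqrt_eq_rpow] at hholder
  calc ‖∫ x, h x ∂μ‖ ^ 2 ≤ (√(μ.real A) * √(∫ x, ‖h x‖ ^ 2 ∂μ)) ^ 2 := by
        gcongr
        exact (norm_integral_le_integral_norm h).trans hholder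
    _ = μ.real A * ∫ x, ‖h x‖ ^ 2 ∂μ := by
        rw [mul_pow, Real.sq_sqrt measureReal_nonneg,
          Real.sq_sqrt (integral_nonneg fun x => by positivity)]

end CauchySchwarz

section Circle

variable {T : ℝ} [Fact (0 < T)]

lemma hasSum_sq_norm_fourierCoeff {f : AddCircle T → ℂ} (hf : MemLp f 2 haarAddCircle) :
    HasSum (fun n => ‖fourierCoeff f n‖ ^ 2) (∫ x, ‖f x‖ ^ 2 ∂haarAddCircle) := by
  have hinteg : ∫ x, ‖hf.toLp f x‖ ^ 2 ∂haarAddCircle = ∫ x, ‖f x‖ ^ 2 ∂haarAddCircle :=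
    integral_congr_ae <| hf.coeFn_toLp.mono fun x hx => by simp only [hx]
  rw [← hinteg, ← fourierCoeff_congr_ae hf.coeFn_toLp]
  exact hasSum_sq_fourierCoeff (hf.toLp f)

lemma fourierCoeff_convolution {f g : AddCircle T → ℂ} (hf : Integrable f haarAddCircle)
    (hg : Integrable g haarAddCircle) (n : ℤ) :
    fourierCoeff (f ⋆[.mul ℝ ℂ, haarAddCircle] g) n = fourierCoeff f n * fourierCoeff g n := by
  have fourier_eq_mul : ∀ x y : AddCircle T,
      (fourier (-n) x : ℂ) = fourier (-n) y * fourier (-n) (x - y) := fun x y => by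
    simp only [fourier_apply]
    rw [← Circle.coe_mul, ← toCircle_add, ← smul_add, add_sub_cancel]
  have hintegral := integral_convolution (ContinuousLinearMap.mul ℝ ℂ)
    (hf.fourier_smul (-n)) (hg.fourier_smul (-n))
  rw [ContinuousLinearMap.mul_apply'] at hintegral
  simp only [fourierCoeff]
  rw [← hintegral]
  congr with x
  simp only [convolution_def, ContinuousLinearMap.mul_apply', smul_eq_mul, ← integral_const_mul]
  congr with y
  rw [fourier_eq_mul x y]
  ring

lemma ae_sq_norm_convolution_le {f g : AddCircle T → ℂ} (hf : MemLp f 2 haarAddCircle)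
    (hg : MemLp g 2 haarAddCircle) {A : Set (AddCircle T)} (hA : MeasurableSet A)
    (hsupp : Function.support f ⊆ A) :
    ∀ᵐ x ∂haarAddCircle, ‖(f ⋆[.mul ℝ ℂ, haarAddCircle] g) x‖ ^ 2 ≤ haarAddCircle.real A *
      ((fun y => ‖f y‖ ^ 2) ⋆[.mul ℝ ℝ, haarAddCircle] (fun y => ‖g y‖ ^ 2)) x := by
  have hf' := (memLp_two_iff_integrable_sq_norm hf.1).1 hf
  have hg' := (memLp_two_iff_integrable_sq_norm hg.1).1 hg
  filter_upwards [hf'.ae_convolution_exists (.mul ℝ ℝ) hg'] with x hx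
  have hprod : MemLp (fun y => f y * g (x - y)) 2 haarAddCircle := by
    have hmeas := hf.1.convolution_integrand_snd (ContinuousLinearMap.mul ℝ ℂ) hg.1 x
    refine (memLp_two_iff_integrable_sq_norm hmeas).2 ?_
    simpa [ConvolutionExistsAt, mul_pow] using hx
  simpa [convolution_def, mul_pow] using
    sq_norm_integral_le_measureReal_mul hprod hA
      ((Function.support_mul_subset_left _ _).trans hsupp)

section Bilinear

variable {ι : Type*} {s : Finset ι} {f g : ι → AddCircle T → ℂ} {A : ι → Set (AddCircle T)}
  {m N : ℝ}

open Classical in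
lemma ae_sq_norm_sum_convolution_le (hf : ∀ i ∈ s, MemLp (f i) 2 haarAddCircle)
    (hg : ∀ i ∈ s, MemLp (g i) 2 haarAddCircle) (hA : ∀ i ∈ s, MeasurableSet (A i))
    (hsupp : ∀ i ∈ s, Function.support (f i) ⊆ A i) (hm : ∀ i ∈ s, haarAddCircle.real (A i) ≤ m)
    (hN : ∀ x, ({i ∈ s | x ∈ Function.support (f i) + Function.support (g i)}.card : ℝ) ≤ N) :
    ∀ᵐ x ∂haarAddCircle, ‖(∑ i ∈ s, f i ⋆[.mul ℝ ℂ, haarAddCircle] g i) x‖ ^ 2 ≤ N * (m *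
      ∑ i ∈ s, ((fun y => ‖f i y‖ ^ 2) ⋆[.mul ℝ ℝ, haarAddCircle] (fun y => ‖g i y‖ ^ 2)) x) := by
  have hterm := (ae_ball_iff s.countable_toSet).2 fun i hi =>
    ae_sq_norm_convolution_le (hf i hi) (hg i hi) (hA i hi) (hsupp i hi)
  filter_upwards [hterm] with x hx
  have hcard : (({i ∈ s | (f i ⋆[.mul ℝ ℂ, haarAddCircle] g i) x ≠ 0}.card : ℕ) : ℝ) ≤ N := by
    refine le_trans ?_ (hN x)
    gcongr
    exact fun h => support_convolution_subset (.mul ℝ ℂ) h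
  rw [Finset.sum_apply]
  refine (sq_norm_sum_le_card_support_mul s _).trans ?_
  gcongr
  · exact (Nat.cast_nonneg _).trans hcard
  rw [Finset.mul_sum]
  refine Finset.sum_le_sum fun i hi => (hx i hi).trans ?_
  gcongr
  · exact integral_nonneg fun y => by simp only [ContinuousLinearMap.mul_apply']; positivity
  · exact hm i hi

open Classical in
lemma sum_sq_norm_sum_fourierCoeff_mul_le (hf : ∀ i ∈ s, MemLp (f i) 2 haarAddCircle)
    (hg : ∀ i ∈ s, MemLp (g i) 2 haarAddCircle) (hA : ∀ i ∈ s, MeasurableSet (A i))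
    (hsupp : ∀ i ∈ s, Function.support (f i) ⊆ A i) (hm : ∀ i ∈ s, haarAddCircle.real (A i) ≤ m)
    (hN : ∀ x, ({i ∈ s | x ∈ Function.support (f i) + Function.support (g i)}.card : ℝ) ≤ N)
    (S : Finset ℤ) :
    ∑ n ∈ S, ‖∑ i ∈ s, fourierCoeff (f i) n * fourierCoeff (g i) n‖ ^ 2 ≤ N * (m *
      ∑ i ∈ s, (∫ x, ‖f i x‖ ^ 2 ∂haarAddCircle) * ∫ x, ‖g i x‖ ^ 2 ∂haarAddCircle) := by
  have hconv : ∀ i ∈ s, Integrable (f i ⋆[.mul ℝ ℂ, haarAddCircle] g i) haarAddCircle :=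
    fun i hi => ((hf i hi).integrable one_le_two).integrable_convolution _
      ((hg i hi).integrable one_le_two)
  have hf' := fun i hi => (memLp_two_iff_integrable_sq_norm (hf i hi).1).1 (hf i hi)
  have hg' := fun i hi => (memLp_two_iff_integrable_sq_norm (hg i hi).1).1 (hg i hi)
  have hconv' := fun i hi => (hf' i hi).integrable_convolution (.mul ℝ ℝ) (hg' i hi)
  set W := ∑ i ∈ s, f i ⋆[.mul ℝ ℂ, haarAddCircle] g i with hW
  have hcoeff : ∀ n, fourierCoeff W n = ∑ i ∈ s, fourierCoeff (f i) n * fourierCoeff (g i) n := by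
    intro n
    rw [hW, fourierCoeff.sum _ _ hconv, Finset.sum_apply]
    exact Finset.sum_congr rfl fun i hi => fourierCoeff_convolution
      ((hf i hi).integrable one_le_two) ((hg i hi).integrable one_le_two) n
  have hmaj := ((integrable_finsetSum s hconv').const_mul m).const_mul N
  have hbound := ae_sq_norm_sum_convolution_le hf hg hA hsupp hm hN
  rw [← hW] at hbound
  have hWmeas : AEStronglyMeasurable W haarAddCircle := (integrable_finsetSum' s hconv).1
  have hWL2 : MemLp W 2 haarAddCircle := (memLp_two_iff_integrable_sq_norm hWmeas).2 <|
    hmaj.mono' (hWmeas.norm.pow 2) (by simpa only [norm_pow, norm_norm] using hbound)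
  calc ∑ n ∈ S, ‖∑ i ∈ s, fourierCoeff (f i) n * fourierCoeff (g i) n‖ ^ 2
      ≤ ∫ x, ‖W x‖ ^ 2 ∂haarAddCircle := by
        simp_rw [← hcoeff]
        exact sum_le_hasSum S (fun n _ => by positivity) (hasSum_sq_norm_fourierCoeff hWL2)
    _ ≤ _ := integral_mono_ae ((memLp_two_iff_integrable_sq_norm hWmeas).1 hWL2) hmaj hbound
    _ = _ := by
        rw [integral_const_mul, integral_const_mul, integral_finsetSum s hconv']
        congr 2
        exact Finset.sum_congr rfl fun i hi => integral_convolution _ (hf' i hi) (hg' i hi)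

end Bilinear

end Circle

/-- The pairs of elements of `K` with sum `l`. -/
def sumPairs {α : Type*} [Add α] [DecidableEq α] (K : Finset α) (l : α) : Finset (α × α) :=
  {p ∈ K ×ˢ K | p.1 + p.2 = l}

lemma mem_sumPairs {α : Type*} [Add α] [DecidableEq α] {K : Finset α} {l : α} {p : α × α} :
    p ∈ sumPairs K l ↔ (p.1 ∈ K ∧ p.2 ∈ K) ∧ p.1 + p.2 = l := by
  rw [sumPairs, Finset.mem_filter, Finset.mem_product]

lemma sum_sumPairs_swap {α M : Type*} [AddCommMagma α] [DecidableEq α] [AddCommMonoid M]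
    (K : Finset α) (l : α) (F : α → α → M) :
    ∑ p ∈ sumPairs K l, F p.1 p.2 = ∑ p ∈ sumPairs K l, F p.2 p.1 :=
  Finset.sum_equiv (Equiv.prodComm α α)
    (fun p => by simp [mem_sumPairs, and_comm, add_comm p.1]) fun _ _ => rfl

lemma sum_sum_sumPairs {α M : Type*} [Add α] [DecidableEq α] [AddCommMonoid M]
    (K : Finset α) (F : α × α → M) :
    ∑ l ∈ K + K, ∑ p ∈ sumPairs K l, F p = ∑ p ∈ K ×ˢ K, F p :=
  Finset.sum_fiberwise_of_maps_to
    (fun _ hp => Finset.add_mem_add (Finset.mem_product.1 hp).1 (Finset.mem_product.1 hp).2) F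

/-- The phase `τk²` gained by the `k`-th Fourier mode in one time step of the free Schrödinger
flow, as a point of the circle. -/
def schrodPhase (τ : ℝ) (k : ℤ) : Torus := ((τ * (k : ℝ) ^ 2 : ℝ) : Torus)

lemma haarAddCircle_real_closedBall_le (c : Torus) {r : ℝ} (hr : 0 ≤ r) :
    haarAddCircle.real (Metric.closedBall c r) ≤ r / Real.pi := by
  have hvol : 2 * Real.pi * haarAddCircle.real (Metric.closedBall c r) ≤ 2 * r := by
    have := AddCircle.volume_closedBall (2 * Real.pi) (x := c) r
    rw [volume_eq_smul_haarAddCircle] at this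
    have h' := congrArg ENNReal.toReal this
    rw [Measure.smul_apply, smul_eq_mul, ENNReal.toReal_mul,
      ENNReal.toReal_ofReal Real.two_pi_pos.le, ENNReal.toReal_ofReal (by positivity)] at h'
    exact h'.trans_le (min_le_right _ _)
  rw [le_div_iff₀ Real.pi_pos]
  linarith

section Counting

variable {τ δ : ℝ} {K : Finset ℤ}

lemma norm_coe_eq_abs_of_abs_le_two {x : ℝ} (hx : |x| ≤ 2) : ‖(x : Torus)‖ = |x| := by
  rw [AddCircle.norm_coe_eq_abs_iff (2 * Real.pi) Real.two_pi_pos.ne', abs_of_pos Real.two_pi_pos]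
  linarith [Real.two_le_pi]

lemma sq_sub_sq_le_of_mem_closedBall (hτ : 0 < τ) (hK : ∀ k ∈ K, τ * (k : ℝ) ^ 2 ≤ 1)
    {l : ℤ} {θ : Torus} {p q : ℤ × ℤ} (hp : p ∈ sumPairs K l) (hq : q ∈ sumPairs K l)
    (hpθ : θ ∈ Metric.closedBall (schrodPhase τ p.1 + schrodPhase τ p.2) δ)
    (hqθ : θ ∈ Metric.closedBall (schrodPhase τ q.1 + schrodPhase τ q.2) δ) :
    ((p.1 - p.2 : ℤ) : ℝ) ^ 2 - ((q.1 - q.2 : ℤ) : ℝ) ^ 2 ≤ 4 * δ / τ := by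
  rw [mem_sumPairs] at hp hq
  set P : ℝ := τ * (p.1 : ℝ) ^ 2 + τ * (p.2 : ℝ) ^ 2 with hP
  set Q : ℝ := τ * (q.1 : ℝ) ^ 2 + τ * (q.2 : ℝ) ^ 2 with hQ
  have hPbounds : 0 ≤ P ∧ P ≤ 2 :=
    ⟨by positivity, by linarith [hK _ hp.1.1, hK _ hp.1.2]⟩
  have hQbounds : 0 ≤ Q ∧ Q ≤ 2 :=
    ⟨by positivity, by linarith [hK _ hq.1.1, hK _ hq.1.2]⟩
  -- Both phases lie in `[0, 2]`, so their difference does not wrap around the circle.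
  have hnorm : ‖((P - Q : ℝ) : Torus)‖ = |P - Q| :=
    norm_coe_eq_abs_of_abs_le_two (abs_le.2 ⟨by linarith, by linarith⟩)
  have hdist : |P - Q| ≤ δ + δ := by
    rw [← hnorm, AddCircle.coe_sub, ← dist_eq_norm]
    exact (dist_triangle_left _ _ θ).trans (add_le_add hpθ hqθ)
  have hsum : ((p.1 : ℝ) + p.2) ^ 2 = ((q.1 : ℝ) + q.2) ^ 2 := by
    rw [← Int.cast_add, ← Int.cast_add, hp.2, hq.2]
  rw [le_div_iff₀ hτ]
  push_cast
  calc (((p.1 : ℝ) - p.2) ^ 2 - ((q.1 : ℝ) - q.2) ^ 2) * τ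
      = 2 * (P - Q) := by rw [hP, hQ]; linear_combination -τ * hsum
    _ ≤ 4 * δ := by linarith [le_abs_self (P - Q)]

open Classical in
lemma card_sumPairs_filter_mem_closedBall_le (hτ : 0 < τ)
    (hK : ∀ k ∈ K, τ * (k : ℝ) ^ 2 ≤ 1) (l : ℤ) (θ : Torus) :
    ({p ∈ sumPairs K l | θ ∈ Metric.closedBall (schrodPhase τ p.1 + schrodPhase τ p.2) δ}.card : ℝ)
      ≤ 2 * (√(4 * δ / τ) + 1) := by
  have sub_injOn : Set.InjOn (fun p : ℤ × ℤ => p.1 - p.2) (sumPairs K l) := by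
    intro p hp q hq h
    have hp' := (mem_sumPairs.1 hp).2
    have hq' := (mem_sumPairs.1 hq).2
    simp only at h
    ext <;> omega
  rw [← Finset.card_image_of_injOn (sub_injOn.mono (Finset.filter_subset _ _))]
  refine card_le_of_forall_sq_sub_sq_le fun q hq q' hq' => ?_
  obtain ⟨p, hp, rfl⟩ := Finset.mem_image.1 hq
  obtain ⟨p', hp', rfl⟩ := Finset.mem_image.1 hq'
  rw [Finset.mem_filter] at hp hp'
  exact sq_sub_sq_le_of_mem_closedBall hτ hK hp.1 hp'.1 hp.2 hp'.2

end Counting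

section ProductCoeff

variable {T : ℝ} [Fact (0 < T)] {K S : Finset ℤ}

/-- The space-time Fourier inversion of a product of two functions on `ℤ × ℤ`, given by their
transforms `f k`, `g k` in the first variable: the entry at `(n, l)` is
`∑_{k + k' = l} (f k)̂(n) (g k')̂(n)`. It is kept as a vector of a Euclidean space because only its
`ℓ²` norm over `S × (K + K)` matters. -/
def productCoeff (K S : Finset ℤ) (f g : ℤ → AddCircle T → ℂ) :
    EuclideanSpace ℂ (S × (K + K : Finset ℤ)) :=
  WithLp.toLp 2 fun x =>
    ∑ p ∈ sumPairs K x.2, fourierCoeff (f p.1) x.1 * fourierCoeff (g p.2) x.1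

lemma sq_norm_productCoeff (f g : ℤ → AddCircle T → ℂ) :
    ‖productCoeff K S f g‖ ^ 2 = ∑ l ∈ K + K, ∑ n ∈ S,
      ‖∑ p ∈ sumPairs K l, fourierCoeff (f p.1) n * fourierCoeff (g p.2) n‖ ^ 2 := by
  rw [EuclideanSpace.norm_sq_eq, Fintype.sum_prod_type_right, ← Finset.sum_coe_sort (K + K)]
  exact Finset.sum_congr rfl fun l _ => Finset.sum_coe_sort S fun n =>
    ‖∑ p ∈ sumPairs K l, fourierCoeff (f p.1) n * fourierCoeff (g p.2) n‖ ^ 2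

lemma productCoeff_swap (f g : ℤ → AddCircle T → ℂ) :
    productCoeff K S f g = productCoeff K S g f := by
  ext x
  simp only [productCoeff]
  rw [sum_sumPairs_swap K _ fun k k' => fourierCoeff (f k) x.1 * fourierCoeff (g k') x.1]
  simp_rw [mul_comm]

lemma productCoeff_sum_sum {ι : Type*} {I : Finset ι} {f g : ι → ℤ → AddCircle T → ℂ}
    (hf : ∀ i ∈ I, ∀ k, Integrable (f i k) haarAddCircle)
    (hg : ∀ i ∈ I, ∀ k, Integrable (g i k) haarAddCircle) :
    productCoeff K S (∑ i ∈ I, f i) (∑ i ∈ I, g i)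
      = ∑ i ∈ I, ∑ j ∈ I, productCoeff K S (f i) (g j) := by
  ext x
  have hcoeff : ∀ {h : ι → ℤ → AddCircle T → ℂ}, (∀ i ∈ I, ∀ k, Integrable (h i k) haarAddCircle) →
      ∀ k n, fourierCoeff (∑ i ∈ I, h i k) n = ∑ i ∈ I, fourierCoeff (h i k) n :=
    fun hh k n => by rw [fourierCoeff.sum I _ fun i hi => hh i hi k, Finset.sum_apply]
  simp only [productCoeff, WithLp.ofLp_sum, Finset.sum_apply, hcoeff hf, hcoeff hg,
    Finset.sum_mul_sum]
  rw [Finset.sum_comm]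
  exact Finset.sum_congr rfl fun i _ => Finset.sum_comm

end ProductCoeff

section BilinearEstimate

variable {τ r R : ℝ} {K : Finset ℤ} {f g : ℤ → Torus → ℂ}

lemma support_add_support_subset_closedBall {p : ℤ × ℤ}
    (hf : ∀ k, Function.support (f k) ⊆ Metric.closedBall (schrodPhase τ k) (τ * r))
    (hg : ∀ k, Function.support (g k) ⊆ Metric.closedBall (schrodPhase τ k) (τ * R))
    (hτ : 0 < τ) (hrR : r ≤ R) :
    Function.support (f p.1) + Function.support (g p.2) ⊆
      Metric.closedBall (schrodPhase τ p.1 + schrodPhase τ p.2) (2 * τ * R) := by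
  rintro _ ⟨x, hx, y, hy, rfl⟩
  calc dist (x + y) (schrodPhase τ p.1 + schrodPhase τ p.2)
      ≤ τ * r + τ * R := (dist_add_add_le _ _ _ _).trans (add_le_add (hf _ hx) (hg _ hy))
    _ ≤ 2 * τ * R := by nlinarith

open Classical in
lemma card_sumPairs_filter_mem_support_add_support_le (hτ : 0 < τ)
    (hK : ∀ k ∈ K, τ * (k : ℝ) ^ 2 ≤ 1) (hrR : r ≤ R) (hR : 1 ≤ R)
    (hf : ∀ k, Function.support (f k) ⊆ Metric.closedBall (schrodPhase τ k) (τ * r))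
    (hg : ∀ k, Function.support (g k) ⊆ Metric.closedBall (schrodPhase τ k) (τ * R))
    (l : ℤ) (θ : Torus) :
    ({p ∈ sumPairs K l | θ ∈ Function.support (f p.1) + Function.support (g p.2)}.card : ℝ)
      ≤ 8 * √R := by
  have hsqrt : √(4 * (2 * τ * R) / τ) ≤ 3 * √R := by
    rw [Real.sqrt_le_left (by positivity), mul_pow, Real.sq_sqrt (by positivity)]
    field_simp
    linarith
  calc ({p ∈ sumPairs K l | θ ∈ Function.support (f p.1) + Function.support (g p.2)}.card : ℝ)
      ≤ ({p ∈ sumPairs K l | θ ∈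
          Metric.closedBall (schrodPhase τ p.1 + schrodPhase τ p.2) (2 * τ * R)}.card : ℝ) := by
        gcongr with p
        exact support_add_support_subset_closedBall hf hg hτ hrR
    _ ≤ 2 * (√(4 * (2 * τ * R) / τ) + 1) := card_sumPairs_filter_mem_closedBall_le hτ hK l θ
    _ ≤ 8 * √R := by linarith [Real.one_le_sqrt.2 hR]

lemma sq_norm_productCoeff_le (hτ : 0 < τ) (hK : ∀ k ∈ K, τ * (k : ℝ) ^ 2 ≤ 1) (hr : 0 ≤ r)
    (hrR : r ≤ R) (hR : 1 ≤ R)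
    (hf : ∀ k, MemLp (f k) 2 haarAddCircle) (hg : ∀ k, MemLp (g k) 2 haarAddCircle)
    (hfsupp : ∀ k, Function.support (f k) ⊆ Metric.closedBall (schrodPhase τ k) (τ * r))
    (hgsupp : ∀ k, Function.support (g k) ⊆ Metric.closedBall (schrodPhase τ k) (τ * R))
    (S : Finset ℤ) :
    ‖productCoeff K S f g‖ ^ 2 ≤ 3 * τ * r * √R *
      ((∑ k ∈ K, ∫ θ, ‖f k θ‖ ^ 2 ∂haarAddCircle) * ∑ k ∈ K, ∫ θ, ‖g k θ‖ ^ 2 ∂haarAddCircle) := by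
  have hconst : 8 * √R * (τ * r / Real.pi) ≤ 3 * τ * r * √R := by
    rw [← mul_div_assoc, div_le_iff₀ Real.pi_pos]
    have : 0 ≤ τ * r * √R := by positivity
    nlinarith [Real.pi_gt_three]
  have fixed_sum_le : ∀ l,
      ∑ n ∈ S, ‖∑ p ∈ sumPairs K l, fourierCoeff (f p.1) n * fourierCoeff (g p.2) n‖ ^ 2 ≤
        3 * τ * r * √R * ∑ p ∈ sumPairs K l,
          (∫ θ, ‖f p.1 θ‖ ^ 2 ∂haarAddCircle) * ∫ θ, ‖g p.2 θ‖ ^ 2 ∂haarAddCircle := by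
    intro l
    have := sum_sq_norm_sum_fourierCoeff_mul_le (s := sumPairs K l)
      (A := fun p => Metric.closedBall (schrodPhase τ p.1) (τ * r))
      (fun p _ => hf p.1) (fun p _ => hg p.2)
      (fun p _ => Metric.isClosed_closedBall.measurableSet) (fun p _ => hfsupp p.1)
      (fun p _ => haarAddCircle_real_closedBall_le (schrodPhase τ p.1) (by positivity))
      (card_sumPairs_filter_mem_support_add_support_le hτ hK hrR hR hfsupp hgsupp l) S
    rw [← mul_assoc] at this
    refine this.trans ?_
    gcongr
  rw [sq_norm_productCoeff]
  refine (Finset.sum_le_sum fun l _ => fixed_sum_le l).trans_eq ?_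
  rw [← Finset.mul_sum, sum_sum_sumPairs, Finset.sum_mul_sum, Finset.sum_product]

end BilinearEstimate

section DyadicPiece

variable {α E : Type*} [NormedAddCommGroup E] {w : α → ℝ} {G : α → E} {i : ℕ}

/-- The restriction of `G` to the dyadic shell `2 ^ i ≤ w < 2 ^ (i + 1)` of a weight `w ≥ 1`. -/
def dyadicPiece (w : α → ℝ) (i : ℕ) (G : α → E) : α → E :=
  {x | Nat.log 2 ⌊w x⌋₊ = i}.indicator G

lemma lt_two_pow_of_mem_support_dyadicPiece {x : α}
    (hx : x ∈ Function.support (dyadicPiece w i G)) : w x < 2 ^ (i + 1) := by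
  have hlevel : x ∈ {x | Nat.log 2 ⌊w x⌋₊ = i} := Set.support_indicator_subset hx
  rw [Set.mem_ofPred_eq] at hlevel
  exact hlevel ▸ lt_two_pow_log_floor_add_one (w x)

lemma sum_range_dyadicPiece {J : ℕ} (hJ : ∀ x, Nat.log 2 ⌊w x⌋₊ < J) (G : α → E) :
    ∑ i ∈ Finset.range J, dyadicPiece w i G = G := by
  ext x
  simp [dyadicPiece, Set.indicator_apply, hJ x]

lemma sum_range_rpow_mul_sq_norm_dyadicPiece_le {c : ℝ} (hc : 0 ≤ c) (hw : ∀ x, 1 ≤ w x)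
    (J : ℕ) (x : α) :
    ∑ i ∈ Finset.range J, ((2 : ℝ) ^ i) ^ c * ‖dyadicPiece w i G x‖ ^ 2 ≤ w x ^ c * ‖G x‖ ^ 2 := by
  calc ∑ i ∈ Finset.range J, ((2 : ℝ) ^ i) ^ c * ‖dyadicPiece w i G x‖ ^ 2
      = ∑ i ∈ Finset.range J,
          if Nat.log 2 ⌊w x⌋₊ = i then ((2 : ℝ) ^ i) ^ c * ‖G x‖ ^ 2 else 0 := by
        refine Finset.sum_congr rfl fun i _ => ?_
        by_cases hi : Nat.log 2 ⌊w x⌋₊ = i <;> simp [dyadicPiece, hi]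
    _ ≤ ((2 : ℝ) ^ Nat.log 2 ⌊w x⌋₊) ^ c * ‖G x‖ ^ 2 := by
        rw [Finset.sum_ite_eq]
        split_ifs
        · rfl
        · positivity
    _ ≤ w x ^ c * ‖G x‖ ^ 2 := by
        gcongr
        exact two_pow_log_floor_le (hw x)

variable [MeasurableSpace α] {μ : Measure α}

lemma memLp_dyadicPiece {p : ℝ≥0∞} (hw : Measurable w) (hG : MemLp G p μ) (i : ℕ) :
    MemLp (dyadicPiece w i G) p μ := by
  have hlevel : Measurable fun x => Nat.log 2 ⌊w x⌋₊ :=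
    (measurable_from_top (f := Nat.log 2)).comp hw.nat_floor
  exact hG.indicator (hlevel (measurableSet_singleton i))

lemma sum_range_rpow_mul_integral_dyadicPiece_le {c : ℝ} (hc : 0 ≤ c) (hwmeas : Measurable w)
    (hw : ∀ x, 1 ≤ w x) (hG : MemLp G 2 μ) (hwG : Integrable (fun x => w x ^ c * ‖G x‖ ^ 2) μ)
    (J : ℕ) :
    ∑ i ∈ Finset.range J, ((2 : ℝ) ^ i) ^ c * ∫ x, ‖dyadicPiece w i G x‖ ^ 2 ∂μ
      ≤ ∫ x, w x ^ c * ‖G x‖ ^ 2 ∂μ := by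
  have hinteg : ∀ i ∈ Finset.range J,
      Integrable (fun x => ((2 : ℝ) ^ i) ^ c * ‖dyadicPiece w i G x‖ ^ 2) μ := fun i _ =>
    have hpiece := memLp_dyadicPiece hwmeas hG i
    ((memLp_two_iff_integrable_sq_norm hpiece.1).1 hpiece).const_mul _
  simp_rw [← integral_const_mul]
  rw [← integral_finsetSum _ hinteg]
  exact integral_mono (integrable_finsetSum _ hinteg) hwG
    (sum_range_rpow_mul_sq_norm_dyadicPiece_le hc hw J)

end DyadicPiece

section ModWeight

variable {τ : ℝ}

/-- The modulation weight `⟨(e^{iθ} - 1)/τ⟩` on the circle: `⟨d_τ(σ - k²)⟩` is its value at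
`τσ - τk²`. -/
def modWeight (τ : ℝ) (θ : Torus) : ℝ := jbr (‖(toCircle θ : ℂ) - 1‖ / τ)

lemma continuous_modWeight (τ : ℝ) : Continuous (modWeight τ) := by
  unfold modWeight jbr
  have := AddCircle.continuous_toCircle (T := 2 * Real.pi)
  fun_prop

lemma one_le_modWeight (τ : ℝ) (θ : Torus) : 1 ≤ modWeight τ θ := by
  rw [modWeight, jbr, Real.one_le_sqrt]
  linarith [sq_nonneg (‖(toCircle θ : ℂ) - 1‖ / τ)]

lemma continuous_rpow_modWeight (τ c : ℝ) : Continuous fun θ => modWeight τ θ ^ c :=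
  (continuous_modWeight τ).rpow_const fun θ =>
    .inl (zero_lt_one.trans_le (one_le_modWeight τ θ)).ne'

lemma toCircle_coe_two_pi (x : ℝ) : (toCircle (x : Torus) : ℂ) = Complex.exp (Complex.I * x) := by
  rw [toCircle_apply_mk, Circle.coe_exp, div_self Real.two_pi_pos.ne', one_mul, mul_comm]

lemma norm_le_norm_toCircle_sub_one (θ : Torus) :
    ‖θ‖ ≤ Real.pi / 2 * ‖(toCircle θ : ℂ) - 1‖ := by
  obtain ⟨x, hx, rfl⟩ : θ ∈ ((↑) : ℝ → Torus) '' Set.Icc (-Real.pi) (-Real.pi + 2 * Real.pi) :=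
    AddCircle.coe_image_Icc_eq (2 * Real.pi) (-Real.pi) ▸ Set.mem_univ θ
  have hhalf : |x / 2| ≤ Real.pi / 2 := by
    rw [abs_div, abs_two]
    gcongr
    exact abs_le.2 ⟨hx.1, by linarith [hx.2]⟩
  have hsin : 2 / Real.pi * |x / 2| ≤ |Real.sin (x / 2)| := Real.mul_abs_le_abs_sin hhalf
  rw [toCircle_coe_two_pi, norm_exp_I_mul_ofReal_sub_one, norm_mul, Real.norm_two, Real.norm_eq_abs]
  calc ‖(x : Torus)‖ ≤ |x| := QuotientAddGroup.norm_mk_le_norm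
    _ = Real.pi / 2 * (2 * (2 / Real.pi * |x / 2|)) := by
        rw [abs_div, abs_two]
        field_simp
    _ ≤ Real.pi / 2 * (2 * |Real.sin (x / 2)|) := by gcongr

lemma norm_le_mul_modWeight (hτ : 0 < τ) (θ : Torus) :
    ‖θ‖ ≤ Real.pi / 2 * (τ * modWeight τ θ) := by
  have hle : ‖(toCircle θ : ℂ) - 1‖ ≤ τ * modWeight τ θ := by
    rw [← div_le_iff₀' hτ]
    exact Real.le_sqrt_of_sq_le (by linarith)
  refine (norm_le_norm_toCircle_sub_one θ).trans ?_
  gcongr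

lemma jbr_norm_dtau (τ σ : ℝ) (hτ : 0 ≤ τ) (k : ℤ) :
    jbr ‖dtau τ (σ - (k : ℝ) ^ 2)‖ = modWeight τ (((τ * σ : ℝ) : Torus) - schrodPhase τ k) := by
  rw [modWeight, schrodPhase, ← AddCircle.coe_sub, toCircle_coe_two_pi, dtau, norm_div,
    norm_real, Real.norm_of_nonneg hτ]
  push_cast
  ring_nf

end ModWeight

section DyadicDecomposition

variable {τ : ℝ} {K : Finset ℤ} {G : ℤ → Torus → ℂ}

/-- The part of `G k` of modulation `⟨d_τ(σ - k²)⟩ ∼ 2 ^ i`. -/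
def modPiece (τ : ℝ) (G : ℤ → Torus → ℂ) (i : ℕ) (k : ℤ) : Torus → ℂ :=
  dyadicPiece (fun θ => modWeight τ (θ - schrodPhase τ k)) i (G k)

/-- The contribution of the modulations of size `2 ^ i` to the `X^{0,3/8}_τ` norm, up to a constant
factor. -/
def modMass (τ : ℝ) (K : Finset ℤ) (G : ℤ → Torus → ℂ) (i : ℕ) : ℝ :=
  √(((2 : ℝ) ^ i) ^ (3 / 4 : ℝ) * ∑ k ∈ K, ∫ θ, ‖modPiece τ G i k θ‖ ^ 2 ∂haarAddCircle)

/-- The square of the `X^{0,3/8}_τ` norm of the modes in `K`, up to the factor `2πτ`, in terms of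
the time transforms `G k`. -/
def modEnergy (τ : ℝ) (K : Finset ℤ) (G : ℤ → Torus → ℂ) : ℝ :=
  ∑ k ∈ K, ∫ θ, modWeight τ (θ - schrodPhase τ k) ^ (3 / 4 : ℝ) * ‖G k θ‖ ^ 2 ∂haarAddCircle

lemma modEnergy_nonneg (τ : ℝ) (K : Finset ℤ) (G : ℤ → Torus → ℂ) : 0 ≤ modEnergy τ K G :=
  Finset.sum_nonneg fun _ _ => integral_nonneg fun _ =>
    mul_nonneg (Real.rpow_nonneg (zero_le_one.trans (one_le_modWeight τ _)) _) (sq_nonneg _)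

lemma continuous_modWeight_sub (τ : ℝ) (k : ℤ) :
    Continuous fun θ => modWeight τ (θ - schrodPhase τ k) :=
  (continuous_modWeight τ).comp (continuous_sub_right _)

lemma memLp_modPiece (hG : ∀ k, MemLp (G k) 2 haarAddCircle) (i : ℕ) (k : ℤ) :
    MemLp (modPiece τ G i k) 2 haarAddCircle :=
  memLp_dyadicPiece (continuous_modWeight_sub τ k).measurable (hG k) i

lemma support_modPiece_subset (hτ : 0 < τ) (i : ℕ) (k : ℤ) :
    Function.support (modPiece τ G i k) ⊆
      Metric.closedBall (schrodPhase τ k) (τ * (Real.pi * 2 ^ i)) := by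
  intro θ hθ
  rw [mem_closedBall_iff_norm]
  calc ‖θ - schrodPhase τ k‖
      ≤ Real.pi / 2 * (τ * modWeight τ (θ - schrodPhase τ k)) := norm_le_mul_modWeight hτ _
    _ ≤ Real.pi / 2 * (τ * 2 ^ (i + 1)) := by
        gcongr
        exact (lt_two_pow_of_mem_support_dyadicPiece hθ).le
    _ = τ * (Real.pi * 2 ^ i) := by ring

lemma exists_sum_range_modPiece_eq (τ : ℝ) (G : ℤ → Torus → ℂ) :
    ∃ J, ∑ i ∈ Finset.range J, modPiece τ G i = G := by
  obtain ⟨B, hB⟩ := isCompact_univ.bddAbove_image (continuous_modWeight τ).continuousOn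
  refine ⟨Nat.log 2 ⌊B⌋₊ + 1, funext fun k => ?_⟩
  rw [Finset.sum_apply]
  refine sum_range_dyadicPiece (fun θ => Nat.lt_succ_of_le ?_) (G k)
  exact Nat.log_mono_right (Nat.floor_le_floor (hB (Set.mem_image_of_mem _ (Set.mem_univ _))))

lemma integrable_rpow_modWeight_mul (hG : ∀ k, MemLp (G k) 2 haarAddCircle) (c : ℝ) (k : ℤ) :
    Integrable (fun θ => modWeight τ (θ - schrodPhase τ k) ^ c * ‖G k θ‖ ^ 2) haarAddCircle := by
  have hcont := (continuous_rpow_modWeight τ c).comp (continuous_sub_right (schrodPhase τ k))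
  obtain ⟨B, hB⟩ := isCompact_univ.exists_bound_of_continuousOn hcont.continuousOn
  exact ((memLp_two_iff_integrable_sq_norm (hG k).1).1 (hG k)).bdd_mul
    hcont.aestronglyMeasurable (ae_of_all _ fun θ => hB θ (Set.mem_univ θ))

lemma sum_sq_modMass_le (hG : ∀ k, MemLp (G k) 2 haarAddCircle) (J : ℕ) :
    ∑ i ∈ Finset.range J, modMass τ K G i ^ 2 ≤ modEnergy τ K G := by
  have hsq : ∀ i, modMass τ K G i ^ 2 =
      ∑ k ∈ K, ((2 : ℝ) ^ i) ^ (3 / 4 : ℝ) * ∫ θ, ‖modPiece τ G i k θ‖ ^ 2 ∂haarAddCircle :=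
    fun i => by rw [modMass, Real.sq_sqrt (by positivity), Finset.mul_sum]
  simp_rw [hsq]
  rw [Finset.sum_comm]
  exact Finset.sum_le_sum fun k _ =>
    sum_range_rpow_mul_integral_dyadicPiece_le (by norm_num)
      (continuous_modWeight_sub τ k).measurable (fun θ => one_le_modWeight τ _) (hG k)
      (integrable_rpow_modWeight_mul hG _ k) J

/-- The ratio of the geometric gain in the interaction of two dyadic modulations. -/
def dyadicGain : ℝ := 2 ^ (-(1 / 8) : ℝ)

lemma dyadicGain_pos : 0 < dyadicGain := Real.rpow_pos_of_pos two_pos _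

lemma dyadicGain_lt_one : dyadicGain < 1 :=
  Real.rpow_lt_one_of_one_lt_of_neg one_lt_two (by norm_num)

lemma two_pow_mul_sqrt_two_pow_add (i d : ℕ) :
    (2 : ℝ) ^ i * √(2 ^ (i + d)) =
      (dyadicGain ^ d) ^ 2 * (((2 : ℝ) ^ i) ^ (3 / 4 : ℝ) * ((2 : ℝ) ^ (i + d)) ^ (3 / 4 : ℝ)) := by
  simp only [dyadicGain, Real.sqrt_eq_rpow, ← Real.rpow_natCast, ← Real.rpow_mul zero_le_two,
    ← Real.rpow_add two_pos]
  congr 1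
  push_cast
  ring

lemma norm_productCoeff_modPiece_add_le (hτ : 0 < τ) (hK : ∀ k ∈ K, τ * (k : ℝ) ^ 2 ≤ 1)
    (hG : ∀ k, MemLp (G k) 2 haarAddCircle) (S : Finset ℤ) (i d : ℕ) :
    ‖productCoeff K S (modPiece τ G i) (modPiece τ G (i + d))‖ ≤
      √(20 * τ) * (dyadicGain ^ d * (modMass τ K G i * modMass τ K G (i + d))) := by
  have hpi : 3 * Real.pi * √Real.pi ≤ 20 := by
    have : √Real.pi ≤ 2 := Real.sqrt_le_left zero_le_two |>.2 (by linarith [Real.pi_le_four])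
    nlinarith [Real.pi_lt_d2, Real.pi_pos]
  have hmass : ∀ j, modMass τ K G j ^ 2 = ((2 : ℝ) ^ j) ^ (3 / 4 : ℝ) *
      ∑ k ∈ K, ∫ θ, ‖modPiece τ G j k θ‖ ^ 2 ∂haarAddCircle :=
    fun j => Real.sq_sqrt (by positivity)
  have hnonneg : ∀ j, 0 ≤ modMass τ K G j := fun j => Real.sqrt_nonneg _
  set a := ∑ k ∈ K, ∫ θ, ‖modPiece τ G i k θ‖ ^ 2 ∂haarAddCircle
  set b := ∑ k ∈ K, ∫ θ, ‖modPiece τ G (i + d) k θ‖ ^ 2 ∂haarAddCircle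
  have hbilinear := sq_norm_productCoeff_le (r := Real.pi * 2 ^ i) (R := Real.pi * 2 ^ (i + d))
    hτ hK (by positivity) (by gcongr <;> simp) (one_le_mul_of_one_le_of_one_le
      (by linarith [Real.pi_gt_three]) (one_le_pow₀ one_le_two))
    (memLp_modPiece hG i) (memLp_modPiece hG (i + d)) (support_modPiece_subset hτ i)
    (support_modPiece_subset hτ (i + d)) S
  have hgain := dyadicGain_pos
  refine le_of_sq_le_sq (hbilinear.trans ?_)
    (by have := hnonneg i; have := hnonneg (i + d); positivity)
  calc 3 * τ * (Real.pi * 2 ^ i) * √(Real.pi * 2 ^ (i + d)) * (a * b)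
      = 3 * Real.pi * √Real.pi * (τ * (2 ^ i * √(2 ^ (i + d))) * (a * b)) := by
        rw [Real.sqrt_mul Real.pi_pos.le]
        ring
    _ ≤ 20 * (τ * (2 ^ i * √(2 ^ (i + d))) * (a * b)) := by gcongr
    _ = (√(20 * τ) * (dyadicGain ^ d * (modMass τ K G i * modMass τ K G (i + d)))) ^ 2 := by
        rw [two_pow_mul_sqrt_two_pow_add, mul_pow, mul_pow, mul_pow, hmass, hmass,
          Real.sq_sqrt (by positivity)]
        ring

lemma norm_productCoeff_modPiece_le (hτ : 0 < τ) (hK : ∀ k ∈ K, τ * (k : ℝ) ^ 2 ≤ 1)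
    (hG : ∀ k, MemLp (G k) 2 haarAddCircle) (S : Finset ℤ) (i j : ℕ) :
    ‖productCoeff K S (modPiece τ G i) (modPiece τ G j)‖ ≤
      √(20 * τ) * (dyadicGain ^ Nat.dist i j * (modMass τ K G i * modMass τ K G j)) := by
  rcases le_total i j with h | h <;> obtain ⟨d, rfl⟩ := Nat.exists_eq_add_of_le h
  · rw [Nat.dist_eq_sub_of_le h, Nat.add_sub_cancel_left]
    exact norm_productCoeff_modPiece_add_le hτ hK hG S i d
  · rw [Nat.dist_eq_sub_of_le_right h, Nat.add_sub_cancel_left, productCoeff_swap,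
      mul_comm (modMass τ K G (j + d))]
    exact norm_productCoeff_modPiece_add_le hτ hK hG S j d

lemma norm_productCoeff_self_le (hτ : 0 < τ) (hK : ∀ k ∈ K, τ * (k : ℝ) ^ 2 ≤ 1)
    (hG : ∀ k, MemLp (G k) 2 haarAddCircle) (S : Finset ℤ) :
    ‖productCoeff K S G G‖ ≤ √(20 * τ) * (2 * (1 - dyadicGain)⁻¹ * modEnergy τ K G) := by
  have hgain : 0 < 1 - dyadicGain := sub_pos.2 dyadicGain_lt_one
  obtain ⟨J, hJ⟩ := exists_sum_range_modPiece_eq τ G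
  have hinteg : ∀ i ∈ Finset.range J, ∀ k, Integrable (modPiece τ G i k) haarAddCircle :=
    fun i _ k => (memLp_modPiece hG i k).integrable one_le_two
  calc ‖productCoeff K S G G‖
      = ‖∑ i ∈ Finset.range J, ∑ j ∈ Finset.range J,
          productCoeff K S (modPiece τ G i) (modPiece τ G j)‖ := by
        rw [← productCoeff_sum_sum hinteg hinteg, hJ]
    _ ≤ √(20 * τ) * (2 * (1 - dyadicGain)⁻¹ * ∑ i ∈ Finset.range J, modMass τ K G i ^ 2) :=
        norm_sum_sum_le_of_norm_le_pow_natDist dyadicGain_pos.le dyadicGain_lt_one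
          (Real.sqrt_nonneg _) (norm_productCoeff_modPiece_le hτ hK hG S)
    _ ≤ √(20 * τ) * (2 * (1 - dyadicGain)⁻¹ * modEnergy τ K G) := by
        gcongr
        exact sum_sq_modMass_le hG J

end DyadicDecomposition

section TrigPoly

variable {T : ℝ}

/-- The trigonometric polynomial `∑_{k ∈ K} c k e^{2πikx/T}`. -/
def trigPoly (K : Finset ℤ) (c : ℤ → ℂ) (x : AddCircle T) : ℂ :=
  ∑ k ∈ K, c k * fourier k x

lemma continuous_trigPoly (K : Finset ℤ) (c : ℤ → ℂ) :
    Continuous (trigPoly K c : AddCircle T → ℂ) := by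
  unfold trigPoly
  fun_prop

lemma trigPoly_sq (K : Finset ℤ) (c : ℤ → ℂ) (x : AddCircle T) :
    trigPoly K c x ^ 2 = trigPoly (K + K) (fun l => ∑ p ∈ sumPairs K l, c p.1 * c p.2) x := by
  rw [trigPoly, sq, Finset.sum_mul_sum, ← Finset.sum_product', ← sum_sum_sumPairs]
  refine Finset.sum_congr rfl fun l _ => ?_
  rw [Finset.sum_mul]
  refine Finset.sum_congr rfl fun p hp => ?_
  rw [← (mem_sumPairs.1 hp).2, fourier_add]
  ring

variable [Fact (0 < T)]

lemma memLp_trigPoly (K : Finset ℤ) (c : ℤ → ℂ) (p : ℝ≥0∞) :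
    MemLp (trigPoly K c : AddCircle T → ℂ) p haarAddCircle :=
  (continuous_trigPoly K c).memLp_of_hasCompactSupport (HasCompactSupport.of_compactSpace _)

lemma fourierCoeff_trigPoly (K : Finset ℤ) (c : ℤ → ℂ) (n : ℤ) :
    fourierCoeff (trigPoly K c : AddCircle T → ℂ) n = if n ∈ K then c n else 0 := by
  have hsum : (trigPoly K c : AddCircle T → ℂ) = ∑ k ∈ K, fun x => c k * fourier k x := by
    ext x
    rw [trigPoly, Finset.sum_apply]
  have hinteg : ∀ k ∈ K, Integrable (fun x : AddCircle T => c k * fourier k x) haarAddCircle :=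
    fun k _ => (by fun_prop : Continuous _).integrable_of_hasCompactSupport
      (HasCompactSupport.of_compactSpace _)
  rw [hsum, fourierCoeff.sum K _ hinteg, Finset.sum_apply]
  simp_rw [fourierCoeff.const_mul, fourierCoeff_fourier, Pi.single_apply, mul_ite, mul_one,
    mul_zero]
  exact Finset.sum_ite_eq K n c

lemma integral_sq_norm_trigPoly (K : Finset ℤ) (c : ℤ → ℂ) :
    ∫ x : AddCircle T, ‖trigPoly K c x‖ ^ 2 ∂haarAddCircle = ∑ k ∈ K, ‖c k‖ ^ 2 := by
  rw [← (hasSum_sq_norm_fourierCoeff (memLp_trigPoly K c 2)).tsum_eq, tsum_eq_sum (s := K)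
    fun k hk => by rw [fourierCoeff_trigPoly, if_neg hk, norm_zero, zero_pow two_ne_zero]]
  exact Finset.sum_congr rfl fun k hk => by rw [fourierCoeff_trigPoly, if_pos hk]

lemma eLpNorm_four_trigPoly_rpow (K : Finset ℤ) (c : ℤ → ℂ) :
    (eLpNorm (trigPoly K c : AddCircle T → ℂ) (ENNReal.ofReal 4) haarAddCircle).toReal ^ (4 : ℝ) =
      ∑ l ∈ K + K, ‖∑ p ∈ sumPairs K l, c p.1 * c p.2‖ ^ 2 := by
  have hpow : ∀ x : AddCircle T, ‖trigPoly K c x‖ ^ (4 : ℝ) = ‖trigPoly K c x ^ 2‖ ^ 2 := by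
    intro x
    rw [norm_pow, ← pow_mul]
    exact_mod_cast Real.rpow_natCast ‖trigPoly K c x‖ 4
  rw [(memLp_trigPoly K c _).eLpNorm_eq_integral_rpow_norm (by simp) (by simp),
    ENNReal.toReal_ofReal zero_le_four, ENNReal.toReal_ofReal (by positivity),
    Real.rpow_inv_rpow (by positivity) four_ne_zero]
  simp_rw [hpow, trigPoly_sq]
  exact integral_sq_norm_trigPoly _ _

end TrigPoly

section Cutoff

variable {τ : ℝ}

/-- The frequencies kept by the cutoff `Π_τ`. -/
def cutoffFreqs (τ : ℝ) : Finset ℤ :=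
  Finset.Icc (-⌊τ ^ (-(1 : ℝ) / 2)⌋) ⌊τ ^ (-(1 : ℝ) / 2)⌋

lemma mem_cutoffFreqs {k : ℤ} : k ∈ cutoffFreqs τ ↔ |(k : ℝ)| ≤ τ ^ (-(1 : ℝ) / 2) := by
  rw [cutoffFreqs, Finset.mem_Icc, ← abs_le, Int.le_floor, Int.cast_abs]

lemma mul_sq_le_one_of_mem_cutoffFreqs (hτ : 0 < τ) {k : ℤ} (hk : k ∈ cutoffFreqs τ) :
    τ * (k : ℝ) ^ 2 ≤ 1 := by
  have hcutoff : (τ ^ (-(1 : ℝ) / 2)) ^ 2 = τ⁻¹ := by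
    rw [← Real.rpow_mul_natCast hτ.le, ← Real.rpow_neg_one]
    norm_num
  calc τ * (k : ℝ) ^ 2 = τ * |(k : ℝ)| ^ 2 := by rw [sq_abs]
    _ ≤ τ * (τ ^ (-(1 : ℝ) / 2)) ^ 2 := by
        gcongr
        exact mem_cutoffFreqs.1 hk
    _ = 1 := by rw [hcutoff, mul_inv_cancel₀ hτ.ne']

lemma projC_eq_trigPoly (τ : ℝ) (f : Torus → ℂ) :
    projC τ f = trigPoly (cutoffFreqs τ) (fourierCoeff f) := by
  ext x
  simp_rw [projC, ← mem_cutoffFreqs]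
  rw [tsum_eq_sum (s := cutoffFreqs τ) fun k hk => if_neg hk]
  exact Finset.sum_congr rfl fun k hk => if_pos hk

lemma fourierCoeff_zero_fun {T : ℝ} [Fact (0 < T)] (k : ℤ) :
    fourierCoeff (0 : AddCircle T → ℂ) k = 0 := by
  simp [fourierCoeff]

/-- The Fourier series in time, with frequency `θ = τσ`, of the `k`-th Fourier coefficient of a
sequence `u` that vanishes off `S`; thus `ũ(σ, k) = τ * timeTransform S u k (τσ)`. -/
def timeTransform (S : Finset ℤ) (u : ℤ → Torus → ℂ) (k : ℤ) : Torus → ℂ :=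
  trigPoly S fun n => fourierCoeff (u n) k

lemma lpLqNorm_four_four_projC (hτ : 0 ≤ τ) {S : Finset ℤ} {u : ℤ → Torus → ℂ}
    (hS : ∀ n ∉ S, u n = 0) :
    lpLqNorm τ 4 4 (fun n => projC τ (u n)) ^ 4 = τ *
      ‖productCoeff (cutoffFreqs τ) S (timeTransform S u) (timeTransform S u)‖ ^ 2 := by
  have hvanish : ∀ n ∉ S,
      ∑ l ∈ cutoffFreqs τ + cutoffFreqs τ, ‖∑ p ∈ sumPairs (cutoffFreqs τ) l,
        fourierCoeff (u n) p.1 * fourierCoeff (u n) p.2‖ ^ 2 = 0 := fun n hn => by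
    simp [hS n hn, fourierCoeff_zero_fun]
  simp_rw [lpLqNorm, projC_eq_trigPoly, eLpNorm_four_trigPoly_rpow]
  rw [tsum_eq_sum hvanish, ← Real.rpow_mul_natCast (by positivity), Nat.cast_ofNat,
    one_div_mul_cancel four_ne_zero, Real.rpow_one, sq_norm_productCoeff, Finset.sum_comm]
  congr 1
  refine Finset.sum_congr rfl fun l _ => Finset.sum_congr rfl fun n hn => ?_
  simp only [timeTransform, fourierCoeff_trigPoly, if_pos hn]

end Cutoff

section BourgainNorm

variable {τ : ℝ} {S : Finset ℤ} {u : ℤ → Torus → ℂ}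

lemma setIntegral_comp_mul_eq_integral_haarAddCircle (hτ : 0 < τ) (F : Torus → ℝ) :
    ∫ σ in Set.Ioc (-(Real.pi / τ)) (Real.pi / τ), F ((τ * σ : ℝ) : Torus) =
      2 * Real.pi / τ * ∫ θ, F θ ∂haarAddCircle := by
  have hle : -(Real.pi / τ) ≤ Real.pi / τ := neg_le_self (by positivity)
  have hleft : τ * -(Real.pi / τ) = -Real.pi := by field_simp
  have hright : τ * (Real.pi / τ) = -Real.pi + 2 * Real.pi := by
    field_simp
    ring
  rw [← intervalIntegral.integral_of_le hle,
    intervalIntegral.integral_comp_mul_left (fun x : ℝ => F (x : Torus)) hτ.ne',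
    integral_haarAddCircle, ← AddCircle.intervalIntegral_preimage (2 * Real.pi) (-Real.pi) F,
    hleft, hright, smul_eq_mul, smul_eq_mul]
  field_simp

lemma tsum_fourierCoeff_mul_exp_eq_timeTransform (hS : ∀ n ∉ S, u n = 0) (τ σ : ℝ) (k : ℤ) :
    ∑' m : ℤ, fourierCoeff (u m) k * Complex.exp (Complex.I * m * τ * σ) =
      timeTransform S u k ((τ * σ : ℝ) : Torus) := by
  rw [tsum_eq_sum (s := S) fun m hm => by rw [hS m hm, fourierCoeff_zero_fun, zero_mul]]
  refine Finset.sum_congr rfl fun m _ => ?_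
  have hpi : (Real.pi : ℂ) ≠ 0 := Complex.ofReal_ne_zero.2 Real.pi_ne_zero
  rw [fourier_coe_apply]
  congr 2
  push_cast
  field_simp

/-- The density of the square of the `X^{0,b}_τ` norm, in the variable `θ = τσ`. -/
def bourgainDensity (τ b : ℝ) (S : Finset ℤ) (u : ℤ → Torus → ℂ) (k : ℤ) (θ : Torus) : ℝ :=
  modWeight τ (θ - schrodPhase τ k) ^ (2 * b) * ‖(τ : ℂ) * timeTransform S u k θ‖ ^ 2

lemma bourgainDensity_nonneg (τ b : ℝ) (S : Finset ℤ) (u : ℤ → Torus → ℂ) (k : ℤ) (θ : Torus) :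
    0 ≤ bourgainDensity τ b S u k θ :=
  mul_nonneg (Real.rpow_nonneg (zero_le_one.trans (one_le_modWeight τ _)) _) (sq_nonneg _)

lemma continuous_bourgainDensity (τ b : ℝ) (S : Finset ℤ) (u : ℤ → Torus → ℂ) (k : ℤ) :
    Continuous (bourgainDensity τ b S u k) :=
  ((continuous_rpow_modWeight τ _).comp (continuous_sub_right _)).mul
    ((continuous_const.mul (continuous_trigPoly _ _)).norm.pow 2)

lemma integral_bourgainDensity_le {τ b B : ℝ} (hB : ∀ θ, modWeight τ θ ^ (2 * b) ≤ B)
    (S : Finset ℤ) (u : ℤ → Torus → ℂ) (k : ℤ) :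
    ∫ θ, bourgainDensity τ b S u k θ ∂haarAddCircle ≤
      B * (τ ^ 2 * ∑ n ∈ S, ‖fourierCoeff (u n) k‖ ^ 2) := by
  have hinteg : Integrable (fun θ => ‖(τ : ℂ) * timeTransform S u k θ‖ ^ 2) haarAddCircle :=
    ((memLp_trigPoly S _ 2).const_mul (τ : ℂ)).integrable_norm_pow two_ne_zero
  calc ∫ θ, bourgainDensity τ b S u k θ ∂haarAddCircle
      ≤ ∫ θ, B * ‖(τ : ℂ) * timeTransform S u k θ‖ ^ 2 ∂haarAddCircle :=
        integral_mono_of_nonneg (ae_of_all _ (bourgainDensity_nonneg τ b S u k))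
          (hinteg.const_mul B)
          (ae_of_all _ fun θ => mul_le_mul_of_nonneg_right (hB _) (sq_nonneg _))
    _ = B * (τ ^ 2 * ∑ n ∈ S, ‖fourierCoeff (u n) k‖ ^ 2) := by
        simp_rw [integral_const_mul, norm_mul, mul_pow, integral_const_mul, Complex.norm_real,
          Real.norm_eq_abs, sq_abs]
        rw [timeTransform, integral_sq_norm_trigPoly]

lemma summable_integral_bourgainDensity (hu : ∀ n, MemLp (u n) 2 haarAddCircle) (τ b : ℝ)
    (S : Finset ℤ) :
    Summable fun k => ∫ θ, bourgainDensity τ b S u k θ ∂haarAddCircle := by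
  obtain ⟨B, hB⟩ := isCompact_univ.bddAbove_image
    (continuous_rpow_modWeight τ (2 * b)).continuousOn
  have hcoeff : Summable fun k => ∑ n ∈ S, ‖fourierCoeff (u n) k‖ ^ 2 :=
    summable_sum fun n _ => (hasSum_sq_norm_fourierCoeff (hu n)).summable
  exact .of_nonneg_of_le (fun k => integral_nonneg (bourgainDensity_nonneg τ b S u k))
    (integral_bourgainDensity_le
      (fun θ => hB (Set.mem_image_of_mem _ (Set.mem_univ θ))) S u)
    ((hcoeff.mul_left _).mul_left B)

lemma hasSum_sq_XdNorm_zero (hτ : 0 < τ) (hu : ∀ n, MemLp (u n) 2 haarAddCircle)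
    (hS : ∀ n ∉ S, u n = 0) (b : ℝ) :
    HasSum (fun k => 2 * Real.pi / τ * ∫ θ, bourgainDensity τ b S u k θ ∂haarAddCircle)
      (XdNorm τ 0 b u ^ 2) := by
  have hdensity : ∀ σ : ℝ, ∀ k : ℤ,
      jbr k ^ (2 * (0 : ℝ)) * jbr ‖dtau τ (σ - (k : ℝ) ^ 2)‖ ^ (2 * b) *
        ‖(τ : ℂ) * ∑' m : ℤ, fourierCoeff (u m) k * Complex.exp (Complex.I * m * τ * σ)‖ ^ 2 =
      bourgainDensity τ b S u k ((τ * σ : ℝ) : Torus) := fun σ k => by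
    rw [mul_zero, Real.rpow_zero, one_mul, jbr_norm_dtau τ σ hτ.le,
      tsum_fourierCoeff_mul_exp_eq_timeTransform hS, bourgainDensity]
  have hsum := hasSum_integral_of_summable_integral_norm
    (μ := volume.restrict (Set.Ioc (-(Real.pi / τ)) (Real.pi / τ)))
    (F := fun k σ => bourgainDensity τ b S u k ((τ * σ : ℝ) : Torus))
    (fun k => ((continuous_bourgainDensity τ b S u k).comp
      ((AddCircle.continuous_mk' _).comp (continuous_const_mul τ))).integrableOn_Ioc) (by
      simp_rw [Real.norm_of_nonneg (bourgainDensity_nonneg τ b S u _ _),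
        setIntegral_comp_mul_eq_integral_haarAddCircle hτ]
      exact (summable_integral_bourgainDensity hu τ b S).mul_left _)
  simp_rw [setIntegral_comp_mul_eq_integral_haarAddCircle hτ] at hsum
  simp_rw [XdNorm, hdensity]
  rwa [Real.sq_sqrt (integral_nonneg fun σ => tsum_nonneg fun k =>
    bourgainDensity_nonneg τ b S u k _)]

lemma mul_modEnergy_timeTransform_le (hτ : 0 < τ) (hu : ∀ n, MemLp (u n) 2 haarAddCircle)
    (hS : ∀ n ∉ S, u n = 0) (K : Finset ℤ) :
    τ * modEnergy τ K (timeTransform S u) ≤ XdNorm τ 0 (3 / 8) u ^ 2 := by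
  have hdensity : ∀ k, 2 * Real.pi / τ * ∫ θ, bourgainDensity τ (3 / 8) S u k θ ∂haarAddCircle =
      2 * Real.pi * (τ * ∫ θ, modWeight τ (θ - schrodPhase τ k) ^ (3 / 4 : ℝ) *
        ‖timeTransform S u k θ‖ ^ 2 ∂haarAddCircle) := fun k => by
    simp_rw [bourgainDensity, show (2 * (3 / 8) : ℝ) = 3 / 4 by norm_num, norm_mul,
      Complex.norm_real, mul_pow, mul_left_comm _ (‖τ‖ ^ 2), integral_const_mul,
      Real.norm_of_nonneg hτ.le]
    field_simp
  have hnonneg : 0 ≤ τ * modEnergy τ K (timeTransform S u) :=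
    mul_nonneg hτ.le (modEnergy_nonneg τ K _)
  have hsum := hasSum_sq_XdNorm_zero hτ hu hS (3 / 8)
  calc τ * modEnergy τ K (timeTransform S u)
      ≤ 2 * Real.pi * (τ * modEnergy τ K (timeTransform S u)) :=
        le_mul_of_one_le_left hnonneg (by linarith [Real.pi_gt_three])
    _ = ∑ k ∈ K, 2 * Real.pi / τ * ∫ θ, bourgainDensity τ (3 / 8) S u k θ ∂haarAddCircle := by
        simp_rw [hdensity, ← Finset.mul_sum, modEnergy]
    _ ≤ XdNorm τ 0 (3 / 8) u ^ 2 := sum_le_hasSum K (fun k _ => mul_nonneg (by positivity)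
        (integral_nonneg (bourgainDensity_nonneg τ _ S u k))) hsum

end BourgainNorm

theorem discrete_l4_estimate_general :
    ∃ C > (0 : ℝ), ∀ τ > (0 : ℝ), ∀ u : ℤ → Torus → ℂ,
      (∀ n, MemLp (u n) 2 haarAddCircle) → {n : ℤ | u n ≠ 0}.Finite →
      lpLqNorm τ 4 4 (fun n => projC τ (u n)) ≤ C * XdNorm τ 0 (3 / 8) u := by
  have hgain : 0 < 1 - dyadicGain := sub_pos.2 dyadicGain_lt_one
  set M : ℝ := √20 * (2 * (1 - dyadicGain)⁻¹)
  refine ⟨√M, by positivity, fun τ hτ u hu hfin => ?_⟩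
  set S := hfin.toFinset
  have hS : ∀ n ∉ S, u n = 0 := fun n hn => by simpa [S] using hn
  set G := timeTransform S u
  set Q := modEnergy τ (cutoffFreqs τ) G
  set X := XdNorm τ 0 (3 / 8) u
  have hX : 0 ≤ X := Real.sqrt_nonneg _
  have hQ : 0 ≤ Q := modEnergy_nonneg _ _ _
  refine le_of_pow_le_pow_left₀ four_ne_zero (by positivity) ?_
  calc lpLqNorm τ 4 4 (fun n => projC τ (u n)) ^ 4
      = τ * ‖productCoeff (cutoffFreqs τ) S G G‖ ^ 2 := lpLqNorm_four_four_projC hτ.le hS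
    _ ≤ τ * (√(20 * τ) * (2 * (1 - dyadicGain)⁻¹ * Q)) ^ 2 := by
        gcongr
        exact norm_productCoeff_self_le hτ (fun k => mul_sq_le_one_of_mem_cutoffFreqs hτ)
          (fun k => memLp_trigPoly _ _ 2) S
    _ = (M * (τ * Q)) ^ 2 := by
        rw [Real.sqrt_mul (by norm_num)]
        linear_combination (√20 * (2 * (1 - dyadicGain)⁻¹ * Q)) ^ 2 * τ * Real.sq_sqrt hτ.le
    _ ≤ (M * X ^ 2) ^ 2 := by
        gcongr
        exact mul_modEnergy_timeTransform_le hτ hu hS _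
    _ = (√M * X) ^ 4 := by
        rw [mul_pow _ X, show √M ^ 4 = (√M ^ 2) ^ 2 by ring, Real.sq_sqrt (by positivity)]
        ring

/-- The discrete Strichartz-type estimate
`‖(Π_τ u_n)‖_{ℓ⁴_τ L⁴} ≲ ‖(u_n)‖_{X^{0,3/8}_τ}`. -/
theorem discrete_l4_estimate :
    ∃ C > (0 : ℝ), ∀ τ ∈ Set.Ioc (0 : ℝ) 1, ∀ u : ℤ → Torus → ℂ,
      (∀ n, MemLp (u n) 2 haarAddCircle) → {n : ℤ | u n ≠ 0}.Finite →
      lpLqNorm τ 4 4 (fun n => projC τ (u n)) ≤ C * XdNorm τ 0 (3 / 8) u := by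
  obtain ⟨C, hC, h⟩ := discrete_l4_estimate_general
  exact ⟨C, hC, fun τ hτ => h τ hτ.1⟩
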